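/- Assume a22 = 0 and let θ > 0. Then the matrix M(θ) is convergent to zero if and only if a11 < 1 and a12·a21·(e^{θT}−1)/θ < 1 − a11. -/

import Mathlib

open Filter

/-- A square matrix with nonnegative real entries is *convergent to zero* if its powers
tend to the zero matrix. -/
def ConvergentToZero {n : ℕ} (M : Matrix (Fin n) (Fin n) ℝ) : Prop :=
  Tendsto (fun k : ℕ => M ^ k) atTop (nhds 0)

/-- The matrix `M(θ)` for `θ > 0`: rows `(a11, a12 (e^{θT}-1)/θ)` and
`(a21, a22 (1-e^{-θT})/θ)`. -/
noncomputable def Mmat (T a11 a12 a21 a22 θ : ℝ) : Matrix (Fin 2) (Fin 2) ℝ :=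
  !![a11, a12 * ((Real.exp (θ * T) - 1) / θ);
     a21, a22 * ((1 - Real.exp (-θ * T)) / θ)]

/-!
A nonnegative matrix `M` has powers tending to zero exactly when `M v < v` entrywise for some
positive vector `v`. If `M v < v`, then `M v ≤ r v` for some `0 ≤ r < 1`, so `M ^ k v ≤ r ^ k v`.
Conversely, once `M ^ k 1 < 1`, the vector `v = (1 + M + ⋯ + M ^ (k - 1)) 1` works, since
`v - M v = 1 - M ^ k 1`.
For a `2 × 2` matrix the existence of `v` is a pair of linear inequalities in its two entries.
-/

open Matrix

section NonnegMatrix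

variable {ι κ R : Type*} [Fintype κ] [Semiring R] [PartialOrder R] [IsOrderedRing R]
  {M : Matrix ι κ R} {v : κ → R}

lemma monotone_mulVec_of_nonneg (hM : ∀ i j, 0 ≤ M i j) : Monotone (M *ᵥ ·) :=
  fun _ _ huw i => dotProduct_le_dotProduct_of_nonneg_left huw (hM i)

lemma mulVec_nonneg_of_nonneg (hM : ∀ i j, 0 ≤ M i j) (hv : 0 ≤ v) : 0 ≤ M *ᵥ v := by
  simpa only [mulVec_zero] using monotone_mulVec_of_nonneg hM hv

lemma entry_mul_le_mulVec (hM : ∀ i j, 0 ≤ M i j) (hv : 0 ≤ v) (i : ι) (j : κ) :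
    M i j * v j ≤ (M *ᵥ v) i :=
  Finset.single_le_sum (f := fun l => M i l * v l) (fun l _ => mul_nonneg (hM i l) (hv l))
    (Finset.mem_univ j)

end NonnegMatrix

lemma pow_mulVec_le_pow_smul {ι R : Type*} [Fintype ι] [DecidableEq ι] [CommSemiring R]
    [PartialOrder R] [IsOrderedRing R] {M : Matrix ι ι R} {v : ι → R} (hM : ∀ i j, 0 ≤ M i j)
    {r : R} (hr : 0 ≤ r) (hMv : M *ᵥ v ≤ r • v) (k : ℕ) : (M ^ k) *ᵥ v ≤ r ^ k • v := by
  induction k with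
  | zero => simp
  | succ k ih =>
    calc (M ^ (k + 1)) *ᵥ v = M *ᵥ ((M ^ k) *ᵥ v) := by rw [pow_succ', mulVec_mulVec]
      _ ≤ M *ᵥ (r ^ k • v) := monotone_mulVec_of_nonneg hM ih
      _ = r ^ k • (M *ᵥ v) := mulVec_smul _ _ _
      _ ≤ r ^ k • (r • v) := smul_le_smul_of_nonneg_left hMv (pow_nonneg hr k)
      _ = r ^ (k + 1) • v := by rw [smul_smul, pow_succ]

section ConvergentToZero

variable {n : ℕ} {M : Matrix (Fin n) (Fin n) ℝ}

lemma convergentToZero_of_mulVec_le_smul (hM : ∀ i j, 0 ≤ M i j) {v : Fin n → ℝ}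
    (hv : ∀ i, 0 < v i) {r : ℝ} (hr₀ : 0 ≤ r) (hr₁ : r < 1) (hMv : M *ᵥ v ≤ r • v) :
    ConvergentToZero M := by
  refine tendsto_pi_nhds.2 fun i => tendsto_pi_nhds.2 fun j => ?_
  have hpow : ∀ k, ∀ i j, 0 ≤ (M ^ k) i j := pow_apply_nonneg hM
  have hlim : Tendsto (fun k : ℕ => r ^ k * v i / v j) atTop (nhds 0) := by
    simpa only [zero_mul, zero_div] using
      ((tendsto_pow_atTop_nhds_zero_of_lt_one hr₀ hr₁).mul_const (v i)).div_const (v j)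
  refine squeeze_zero (fun k => hpow k i j) (fun k => ?_) hlim
  rw [le_div_iff₀ (hv j)]
  calc (M ^ k) i j * v j ≤ ((M ^ k) *ᵥ v) i :=
        entry_mul_le_mulVec (hpow k) (fun l => (hv l).le) i j
    _ ≤ r ^ k * v i := pow_mulVec_le_pow_smul hM hr₀ hMv k i

lemma convergentToZero_of_mulVec_lt (hM : ∀ i j, 0 ≤ M i j) {v : Fin n → ℝ}
    (hv : ∀ i, 0 < v i) (hMv : ∀ i, (M *ᵥ v) i < v i) : ConvergentToZero M := by
  have hsmul : ∀ i, ∀ᶠ r in nhdsWithin 1 (Set.Iio 1), (M *ᵥ v) i < r * v i := fun i =>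
    ((tendsto_id.mono_left nhdsWithin_le_nhds).mul_const (v i)).eventually_const_lt
      (by simpa only [one_mul] using hMv i)
  have hnonneg : ∀ᶠ r : ℝ in nhdsWithin 1 (Set.Iio 1), 0 ≤ r :=
    nhdsWithin_le_nhds (Ici_mem_nhds zero_lt_one)
  obtain ⟨r, hMr, hr₀, hr₁⟩ :=
    ((eventually_all.2 hsmul).and (hnonneg.and self_mem_nhdsWithin)).exists
  exact convergentToZero_of_mulVec_le_smul hM hv hr₀ hr₁ fun i => (hMr i).le

lemma ConvergentToZero.tendsto_pow_mulVec (h : ConvergentToZero M) (v : Fin n → ℝ) :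
    Tendsto (fun k : ℕ => (M ^ k) *ᵥ v) atTop (nhds 0) := by
  have hcont : Continuous fun A : Matrix (Fin n) (Fin n) ℝ => A *ᵥ v := by fun_prop
  simpa only [zero_mulVec, Function.comp_def] using (hcont.tendsto 0).comp h

lemma ConvergentToZero.exists_pos_mulVec_lt (h : ConvergentToZero M) (hM : ∀ i j, 0 ≤ M i j) :
    ∃ v : Fin n → ℝ, (∀ i, 0 < v i) ∧ ∀ i, (M *ᵥ v) i < v i := by
  have hone : ∀ i, ∀ᶠ k : ℕ in atTop, ((M ^ k) *ᵥ 1) i < 1 := fun i =>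
    (tendsto_pi_nhds.1 (h.tendsto_pow_mulVec 1) i).eventually_lt_const zero_lt_one
  obtain ⟨k, hk⟩ := (eventually_all.2 hone).exists
  set v := (∑ l ∈ Finset.range k, M ^ l) *ᵥ (1 : Fin n → ℝ)
  have hsum : ∀ i j, 0 ≤ (∑ l ∈ Finset.range k, M ^ l) i j := fun i j => by
    rw [Matrix.sum_apply]
    exact Finset.sum_nonneg fun l _ => pow_apply_nonneg hM l i j
  have hv_nonneg : 0 ≤ v := mulVec_nonneg_of_nonneg hsum zero_le_one
  have htelescope : v - M *ᵥ v = 1 - (M ^ k) *ᵥ 1 := by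
    simpa only [← mulVec_mulVec, sub_mulVec, one_mulVec] using
      congrArg (· *ᵥ (1 : Fin n → ℝ)) (mul_neg_geom_sum M k)
  have hMv : ∀ i, (M *ᵥ v) i < v i := fun i => by
    have hi : v i - (M *ᵥ v) i = 1 - ((M ^ k) *ᵥ 1) i := congrFun htelescope i
    linarith [hk i]
  exact ⟨v, fun i => (mulVec_nonneg_of_nonneg hM hv_nonneg i).trans_lt (hMv i), hMv⟩

theorem convergentToZero_iff_exists_pos_mulVec_lt (hM : ∀ i j, 0 ≤ M i j) :
    ConvergentToZero M ↔ ∃ v : Fin n → ℝ, (∀ i, 0 < v i) ∧ ∀ i, (M *ᵥ v) i < v i :=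
  ⟨fun h => h.exists_pos_mulVec_lt hM, fun ⟨_, hv, hMv⟩ => convergentToZero_of_mulVec_lt hM hv hMv⟩

end ConvergentToZero

lemma exists_pos_add_mul_lt_iff {R : Type*} [CommRing R] [LinearOrder R] [IsStrictOrderedRing R]
    {a b c d : R} (hb : 0 ≤ b) (hc : 0 ≤ c) :
    (∃ x y, (0 < x ∧ 0 < y) ∧ a * x + b * y < x ∧ c * x + d * y < y) ↔
      a < 1 ∧ d < 1 ∧ b * c < (1 - a) * (1 - d) := by
  constructor
  · rintro ⟨x, y, ⟨hx, hy⟩, hax, hdy⟩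
    have hby : b * y < (1 - a) * x := by linarith
    have hcx : c * x < (1 - d) * y := by linarith
    have ha : 0 < 1 - a := pos_of_mul_pos_left ((mul_nonneg hb hy.le).trans_lt hby) hx.le
    have hd : 0 < 1 - d := pos_of_mul_pos_left ((mul_nonneg hc hx.le).trans_lt hcx) hy.le
    refine ⟨sub_pos.1 ha, sub_pos.1 hd, lt_of_mul_lt_mul_right ?_ (mul_pos hx hy).le⟩
    calc b * c * (x * y) = b * y * (c * x) := by ring
      _ < (1 - a) * x * ((1 - d) * y) :=
        mul_lt_mul'' hby hcx (mul_nonneg hb hy.le) (mul_nonneg hc hx.le)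
      _ = (1 - a) * (1 - d) * (x * y) := by ring
  · rintro ⟨ha, hd, hdet⟩
    -- The adjugate of `1 - !![a, b; c, d]` applied to `(1, 1)`.
    exact ⟨1 - d + b, 1 - a + c, ⟨by linarith, by linarith⟩, by linarith, by linarith⟩

theorem convergentToZero_fin_two_iff {a b c d : ℝ} (ha : 0 ≤ a) (hb : 0 ≤ b) (hc : 0 ≤ c)
    (hd : 0 ≤ d) :
    ConvergentToZero !![a, b; c, d] ↔ a < 1 ∧ d < 1 ∧ b * c < (1 - a) * (1 - d) := by
  have hM : ∀ i j, 0 ≤ !![a, b; c, d] i j := by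
    simp [Fin.forall_fin_two, ha, hb, hc, hd]
  rw [convergentToZero_iff_exists_pos_mulVec_lt hM, ← exists_pos_add_mul_lt_iff hb hc]
  simp [Fin.exists_fin_succ_pi, Fin.forall_fin_two, vecHead, vecTail]

lemma exp_mul_sub_one_div_pos {θ T : ℝ} (hθ : θ ≠ 0) (hT : 0 < T) :
    0 < (Real.exp (θ * T) - 1) / θ := by
  rcases hθ.lt_or_gt with hθ | hθ
  · exact div_pos_of_neg_of_neg
      (sub_neg.2 (Real.exp_lt_one_iff.2 (mul_neg_of_neg_of_pos hθ hT))) hθ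
  · exact div_pos (sub_pos.2 (Real.one_lt_exp_iff.2 (mul_pos hθ hT))) hθ

lemma one_sub_exp_neg_mul_div_pos {θ T : ℝ} (hθ : θ ≠ 0) (hT : 0 < T) :
    0 < (1 - Real.exp (-θ * T)) / θ := by
  rw [← neg_div_neg_eq, neg_sub]
  exact exp_mul_sub_one_div_pos (neg_ne_zero.2 hθ) hT

theorem mmat_convergentToZero_iff_of_a22_eq_zero_general (T a11 a12 a21 a22 θ : ℝ)
    (hT : 0 < T) (h11 : 0 ≤ a11) (h12 : 0 ≤ a12) (h21 : 0 ≤ a21) (h22 : 0 ≤ a22)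
    (hθ : θ ≠ 0) :
    ConvergentToZero (Mmat T a11 a12 a21 a22 θ) ↔
      a11 < 1 ∧ a22 * ((1 - Real.exp (-θ * T)) / θ) < 1 ∧
        a12 * a21 * ((Real.exp (θ * T) - 1) / θ) <
          (1 - a11) * (1 - a22 * ((1 - Real.exp (-θ * T)) / θ)) := by
  rw [Mmat, mul_right_comm a12 a21]
  exact convergentToZero_fin_two_iff h11 (mul_nonneg h12 (exp_mul_sub_one_div_pos hθ hT).le) h21
    (mul_nonneg h22 (one_sub_exp_neg_mul_div_pos hθ hT).le)

/-- If `a22 = 0` and `θ > 0`, then `M(θ)` is convergent to zero if and only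
if `a11 < 1` and `a12 a21 (e^{θT}-1)/θ < 1 - a11`. -/
theorem mmat_convergentToZero_iff_of_a22_eq_zero (T a11 a12 a21 a22 θ : ℝ)
    (hT : 0 < T) (h11 : 0 ≤ a11) (h12 : 0 ≤ a12) (h21 : 0 ≤ a21) (h22 : a22 = 0)
    (hθ : 0 < θ) :
    ConvergentToZero (Mmat T a11 a12 a21 a22 θ) ↔
      (a11 < 1 ∧ a12 * a21 * ((Real.exp (θ * T) - 1) / θ) < 1 - a11) := by
  simpa [h22] using
    mmat_convergentToZero_iff_of_a22_eq_zero_general T a11 a12 a21 a22 θ hT h11 h12 h21 h22.ge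
      hθ.ne'
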